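/- The Dougall-type series Ω(3/2, 1/2, 1, 1, 1) = ∑_{k=0}^∞ ((1/2)_k (1)_k^3 / ((2)_k (3/2)_k^3)) · (3/2 + 2k) converges and equals (7/4)·ζ(3). -/

import Mathlib

noncomputable def poch (x : ℝ) (n : ℕ) : ℝ := ∏ i ∈ Finset.range n, (x + i)

noncomputable def zeta3 : ℝ := ∑' n : ℕ, 1 / ((n : ℝ) + 1) ^ 3

noncomputable def UU (x : ℝ) (k : ℕ) : ℝ := ∏ i ∈ Finset.range k, (((i : ℝ) + 1) / (x + 1 + i))

noncomputable def FF (x : ℝ) (k : ℕ) : ℝ :=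
  UU x k ^ 2 * (x + 1 + 2 * k) / (8 * (k + 1) * (x + k) * x ^ 2)

noncomputable def GG (x : ℝ) (k : ℕ) : ℝ :=
  - (UU x k ^ 2 * (k + 2 * x) / (8 * x ^ 3 * (x + k)))

lemma UU_succ (x : ℝ) (k : ℕ) : UU x (k + 1) = UU x k * (((k : ℝ) + 1) / (x + 1 + k)) := by
  unfold UU
  rw [Finset.prod_range_succ]

lemma UU_shift (x : ℝ) (hx : 0 < x) (k : ℕ) :
    UU (x + 1) k = UU x k * ((x + 1) / (x + 1 + k)) := by
  induction k with
  | zero => simp [UU]; field_simp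
  | succ k ih =>
    rw [UU_succ, UU_succ, ih]
    have hk : (0 : ℝ) ≤ k := k.cast_nonneg
    push_cast
    have h1 : x + 1 + k ≠ 0 := by positivity
    have h2 : x + 1 + 1 + k ≠ 0 := by positivity
    have h3 : x + 1 + (k + 1) ≠ 0 := by positivity
    field_simp
    ring

lemma UU_sq_le (x : ℝ) (hx : 1 / 2 ≤ x) (k : ℕ) : UU x k ^ 2 ≤ 1 / ((k : ℝ) + 1) := by
  induction k with
  | zero => simp [UU]
  | succ k ih =>
    have hk : (0 : ℝ) ≤ k := k.cast_nonneg
    rw [UU_succ, mul_pow]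
    push_cast
    calc UU x k ^ 2 * (((k : ℝ) + 1) / (x + 1 + k)) ^ 2
        ≤ 1 / ((k : ℝ) + 1) * (((k : ℝ) + 1) / (x + 1 + k)) ^ 2 := by gcongr
      _ = ((k : ℝ) + 1) / (x + 1 + k) ^ 2 := by field_simp
      _ ≤ 1 / ((k : ℝ) + 1 + 1) := by
        rw [div_le_div_iff₀ (by positivity) (by positivity)]
        nlinarith

lemma FF_nonneg (x : ℝ) (hx : 1 / 2 ≤ x) (k : ℕ) : 0 ≤ FF x k := by
  have : 0 < x := by linarith
  unfold FF
  positivity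

lemma FF_le (x : ℝ) (hx : 1 / 2 ≤ x) (k : ℕ) :
    FF x k ≤ 1 / x ^ 2 * (1 / ((k : ℝ) + 1) ^ 2) := by
  have h0 : 0 < x := by linarith
  have hk : (0 : ℝ) ≤ k := k.cast_nonneg
  have h := UU_sq_le x hx k
  unfold FF
  calc UU x k ^ 2 * (x + 1 + 2 * k) / (8 * (k + 1) * (x + k) * x ^ 2)
      ≤ (1 / ((k : ℝ) + 1)) * (8 * (x + k)) / (8 * (k + 1) * (x + k) * x ^ 2) := by
        gcongr
        linarith
    _ = 1 / x ^ 2 * (1 / ((k : ℝ) + 1) ^ 2) := by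
        have : x + k ≠ 0 := by positivity
        field_simp

lemma sumsq : Summable (fun k : ℕ => 1 / ((k : ℝ) + 1) ^ 2) := by
  have := (summable_nat_add_iff 1).2 (Real.summable_one_div_nat_pow.2 (one_lt_two))
  simpa using this

lemma FF_summable (x : ℝ) (hx : 1 / 2 ≤ x) : Summable (FF x) :=
  Summable.of_nonneg_of_le (FF_nonneg x hx) (FF_le x hx) (sumsq.mul_left _)

lemma FG (x : ℝ) (hx : 0 < x) (k : ℕ) :
    FF x k - FF (x + 1) k = GG x (k + 1) - GG x k := by
  have hk : (0 : ℝ) ≤ k := k.cast_nonneg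
  unfold FF GG
  rw [UU_shift x hx, UU_succ]
  push_cast
  have h1 : x + 1 + k ≠ 0 := by positivity
  have h2 : x + k ≠ 0 := by positivity
  have h3 : x + (k + 1) = x + 1 + k := by ring
  have h4 : x + 1 ≠ 0 := by positivity
  rw [h3]
  field_simp
  ring

lemma GG_tendsto (x : ℝ) (hx : 1 / 2 ≤ x) :
    Filter.Tendsto (GG x) Filter.atTop (nhds 0) := by
  have h0 : 0 < x := by linarith
  have ht : Filter.Tendsto (fun k : ℕ => (1 / (4 * x ^ 3)) * (1 / ((k : ℝ) + 1)))
      Filter.atTop (nhds 0) := by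
    simpa only [mul_zero] using (tendsto_one_div_add_atTop_nhds_zero_nat (𝕜 := ℝ)).const_mul (1 / (4 * x ^ 3))
  refine squeeze_zero_norm (fun k => ?_) ht
  have hk : (0 : ℝ) ≤ k := k.cast_nonneg
  have h := UU_sq_le x hx k
  unfold GG
  rw [norm_neg, Real.norm_of_nonneg (by positivity)]
  calc UU x k ^ 2 * (k + 2 * x) / (8 * x ^ 3 * (x + k))
      ≤ (1 / ((k : ℝ) + 1)) * (2 * (x + k)) / (8 * x ^ 3 * (x + k)) := by
        gcongr
        linarith
    _ = _ := by
        have : x + k ≠ 0 := by positivity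
        field_simp
        norm_num

lemma step (x : ℝ) (hx : 1 / 2 ≤ x) :
    ∑' k, FF x k - ∑' k, FF (x + 1) k = 1 / (4 * x ^ 3) := by
  have h0 : 0 < x := by linarith
  have hs := (FF_summable x hx).hasSum.sub (FF_summable (x + 1) (by linarith)).hasSum
  have h1 := hs.tendsto_sum_nat
  simp_rw [FG x h0, Finset.sum_range_sub] at h1
  have h2 := (GG_tendsto x hx).sub_const (GG x 0)
  rw [tendsto_nhds_unique h1 h2]
  simp [GG, UU]
  field_simp
  norm_num

lemma partial_sum (N : ℕ) :
    ∑ n ∈ Finset.range N, 2 / (2 * (n : ℝ) + 1) ^ 3 =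
      ∑' k, FF (1 / 2) k - ∑' k, FF (N + 1 / 2) k := by
  induction N with
  | zero => simp
  | succ N ih =>
    have hN : (0 : ℝ) ≤ N := N.cast_nonneg
    have := step (N + 1 / 2) (by linarith)
    rw [Finset.sum_range_succ, ih]
    push_cast
    rw [show (N : ℝ) + 1 + 1 / 2 = N + 1 / 2 + 1 by ring]
    have h : 2 / (2 * (N : ℝ) + 1) ^ 3 = 1 / (4 * ((N : ℝ) + 1 / 2) ^ 3) := by
      rw [div_eq_div_iff (by positivity) (by positivity)]
      ring
    linarith

lemma tail_tendsto :
    Filter.Tendsto (fun N : ℕ => ∑' k, FF ((N : ℝ) + 1 / 2) k) Filter.atTop (nhds 0) := by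
  have ht : Filter.Tendsto (fun N : ℕ => (4 * ∑' k : ℕ, 1 / ((k : ℝ) + 1) ^ 2) * (1 / ((N : ℝ) + 1)))
      Filter.atTop (nhds 0) := by
    simpa only [mul_zero] using (tendsto_one_div_add_atTop_nhds_zero_nat (𝕜 := ℝ)).const_mul
      (4 * ∑' k : ℕ, 1 / ((k : ℝ) + 1) ^ 2)
  refine squeeze_zero (fun N => ?_) (fun N => ?_) ht
  · exact tsum_nonneg (FF_nonneg _ (by linarith [(N.cast_nonneg : (0 : ℝ) ≤ N)]))
  · have hN : (0 : ℝ) ≤ N := N.cast_nonneg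
    have hx : (1 : ℝ) / 2 ≤ N + 1 / 2 := by linarith
    have h1 := (FF_summable _ hx).tsum_le_tsum (FF_le _ hx) (sumsq.mul_left _)
    rw [tsum_mul_left] at h1
    refine h1.trans ?_
    have hS : 0 ≤ ∑' k : ℕ, 1 / ((k : ℝ) + 1) ^ 2 := tsum_nonneg (fun k => by positivity)
    have : 1 / ((N : ℝ) + 1 / 2) ^ 2 ≤ 4 * (1 / ((N : ℝ) + 1)) := by
      rw [mul_one_div, div_le_div_iff₀ (by positivity) (by positivity)]
      nlinarith
    nlinarith

lemma odd_sum : HasSum (fun n : ℕ => 2 / (2 * (n : ℝ) + 1) ^ 3) (7 / 4 * zeta3) := by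
  have hz : Summable (fun n : ℕ => 1 / ((n : ℝ) + 1) ^ 3) := by
    have := (summable_nat_add_iff 1).2
      (Real.summable_one_div_nat_pow.2 (show 1 < 3 by norm_num))
    simpa using this
  have he : Summable (fun n : ℕ => 1 / (((2 * n : ℕ) : ℝ) + 1) ^ 3) :=
    hz.comp_injective (i := fun n : ℕ => 2 * n) (fun a b h => by simpa using h)
  have ho : HasSum (fun n : ℕ => 1 / (((2 * n + 1 : ℕ) : ℝ) + 1) ^ 3) (1 / 8 * zeta3) := by
    have h8 := hz.hasSum.mul_left (1 / 8)
    have hfun : (fun n : ℕ => 1 / (((2 * n + 1 : ℕ) : ℝ) + 1) ^ 3) =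
        fun n : ℕ => 1 / 8 * (1 / ((n : ℝ) + 1) ^ 3) := by
      funext n
      push_cast
      rw [show (2 * (n : ℝ) + 1 + 1) = 2 * (n + 1) by ring, mul_pow]
      field_simp
      norm_num
    rw [hfun]
    exact h8
  obtain ⟨E, hE⟩ : ∃ E : ℝ, E = ∑' n : ℕ, 1 / (((2 * n : ℕ) : ℝ) + 1) ^ 3 := ⟨_, rfl⟩
  have heE := he.hasSum
  rw [← hE] at heE
  have hsum : HasSum (fun n : ℕ => 1 / ((n : ℝ) + 1) ^ 3) (E + 1 / 8 * zeta3) :=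
    HasSum.even_add_odd (f := fun n : ℕ => 1 / ((n : ℝ) + 1) ^ 3) heE ho
  have h : zeta3 = E + 1 / 8 * zeta3 := by
    conv_lhs => unfold zeta3
    exact hsum.tsum_eq
  have h2 := heE.mul_left 2
  have hfun : (fun n : ℕ => 2 / (2 * (n : ℝ) + 1) ^ 3) =
      fun n : ℕ => 2 * (1 / (((2 * n : ℕ) : ℝ) + 1) ^ 3) := by
    funext n
    push_cast
    ring
  have hv : 7 / 4 * zeta3 = 2 * E := by
    linarith
  rw [hfun, hv]
  exact h2

lemma poch_pos (x : ℝ) (hx : 0 < x) (k : ℕ) : 0 < poch x k :=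
  Finset.prod_pos (fun i _ => by positivity)

lemma poch_shift (x : ℝ) (k : ℕ) : x * poch (x + 1) k = poch x k * (x + k) := by
  induction k with
  | zero => simp [poch]
  | succ k ih =>
    have h1 : poch (x + 1) (k + 1) = poch (x + 1) k * (x + 1 + k) := by
      simp [poch, Finset.prod_range_succ]
    have h2 : poch x (k + 1) = poch x k * (x + k) := by
      simp [poch, Finset.prod_range_succ]
    rw [h1, h2, ← mul_assoc, ih]
    push_cast
    ring

lemma UU_poch (k : ℕ) : UU (1 / 2) k = poch 1 k / poch (3 / 2) k := by
  unfold UU poch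
  rw [← Finset.prod_div_distrib]
  refine Finset.prod_congr rfl (fun i _ => ?_)
  congr 1 <;> ring

lemma term_eq (k : ℕ) :
    poch (1/2) k * poch 1 k ^ 3 / (poch 2 k * poch (3/2) k ^ 3) * ((3:ℝ)/2 + 2 * k)
      = FF (1 / 2) k := by
  have h1 := poch_shift (1 / 2) k
  have h2 := poch_shift 1 k
  rw [show (1 : ℝ) / 2 + 1 = 3 / 2 by norm_num] at h1
  rw [show (1 : ℝ) + 1 = 2 by norm_num, one_mul] at h2
  have p1 := poch_pos (1 / 2) (by norm_num) k
  have p2 := poch_pos 1 (by norm_num) k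
  have h1' : poch (3 / 2) k = poch (1 / 2) k * (1 + 2 * k) := by linarith
  unfold FF
  rw [UU_poch, h2, h1']
  have e : (1 : ℝ) / 2 + k = (1 + 2 * k) / 2 := by ring
  rw [e]
  have : (1 : ℝ) + 2 * k ≠ 0 := by positivity
  have : (1 : ℝ) + k ≠ 0 := by positivity
  have : (k : ℝ) + 1 ≠ 0 := by positivity
  field_simp
  ring

theorem stmt4 :
    HasSum (fun k : ℕ =>
      poch (1/2) k * poch 1 k ^ 3 / (poch 2 k * poch (3/2) k ^ 3) *
        ((3:ℝ)/2 + 2 * k))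
      (7/4 * zeta3) := by
  simp_rw [term_eq]
  have h1 := odd_sum.tendsto_sum_nat
  simp_rw [partial_sum] at h1
  have h2 := tail_tendsto.const_sub (∑' k, FF (1 / 2) k)
  rw [tendsto_nhds_unique h1 h2, sub_zero]
  exact (FF_summable (1 / 2) le_rfl).hasSum
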